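/- Let K, L be convex subsets of ℝⁿ and t ∈ (0,1). Then γⁿ((1−t)K + tL) ≥ γⁿ(K)^{1−t} · γⁿ(L)^t, where γⁿ is the standard Gaussian measure on ℝⁿ. -/

import Mathlib

open MeasureTheory Pointwise

noncomputable def gaussian (n : ℕ) : Measure (EuclideanSpace ℝ (Fin n)) :=
  volume.withDensity fun x =>
    ENNReal.ofReal ((2 * Real.pi) ^ (-(n : ℝ) / 2) * Real.exp (-‖x‖ ^ 2 / 2))

lemma vol_aff (P : Set ℝ) (a c : ℝ) (ha : 0 < a) :
    volume ((fun x => a * x + c) '' P) = ENNReal.ofReal a * volume P := by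
  have : (fun x => a * x + c) '' P = (fun x => x + c) '' (a • P) := by
    rw [← Set.image_smul, Set.image_image]; rfl
  rw [this, Set.image_add_right, measure_preimage_add_right, Measure.addHaar_smul]
  simp [abs_of_pos ha]

lemma bm_compact (P Q C : Set ℝ) (a b : ℝ) (ha : 0 < a) (hb : 0 < b)
    (hP : IsCompact P) (hQ : IsCompact Q) (hP0 : P.Nonempty) (hQ0 : Q.Nonempty)
    (h : ∀ x ∈ P, ∀ y ∈ Q, a * x + b * y ∈ C) :
    ENNReal.ofReal a * volume P + ENNReal.ofReal b * volume Q ≤ volume C := by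
  obtain ⟨p, hp, hpm⟩ := hP.exists_isGreatest hP0
  obtain ⟨q, hq, hqm⟩ := hQ.exists_isLeast hQ0
  have e1 := vol_aff P a (b * q) ha
  have e2 := vol_aff Q b (a * p) hb
  rw [← e1, ← e2]
  have hc : IsCompact ((fun x => b * x + a * p) '' Q) := hQ.image (by fun_prop)
  rw [← measure_union_add_inter _ hc.measurableSet]
  have h0 : volume ((fun x => a * x + b * q) '' P ∩ (fun x => b * x + a * p) '' Q) = 0 := by
    refine measure_mono_null (t := {a * p + b * q}) ?_ (by simp)
    rintro z ⟨⟨x, hx, rfl⟩, ⟨y, hy, hxy⟩⟩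
    have h1 := mul_le_mul_of_nonneg_left (hpm hx) ha.le
    have h2 := mul_le_mul_of_nonneg_left (hqm hy) hb.le
    simp only [Set.mem_singleton_iff] at *
    linarith
  rw [h0, add_zero]
  apply measure_mono
  rintro z (⟨x, hx, rfl⟩ | ⟨y, hy, rfl⟩)
  · exact h x hx q hq
  · have := h p hp y hy
    rwa [add_comm] at this

lemma bm_one (A B C : Set ℝ) (a b : ℝ) (ha : 0 < a) (hb : 0 < b)
    (hA : MeasurableSet A) (hB : MeasurableSet B) (hA0 : A.Nonempty) (hB0 : B.Nonempty)
    (h : ∀ x ∈ A, ∀ y ∈ B, a * x + b * y ∈ C) :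
    ENNReal.ofReal a * volume A + ENNReal.ofReal b * volume B ≤ volume C := by
  obtain ⟨x0, hx0⟩ := hA0
  obtain ⟨y0, hy0⟩ := hB0
  rw [hA.measure_eq_iSup_isCompact, hB.measure_eq_iSup_isCompact]
  simp only [ENNReal.mul_iSup]
  refine ENNReal.iSup_add_iSup_le fun P Q => ?_
  by_cases hP : P ⊆ A ∧ IsCompact P
  swap
  · have : (⨆ (_ : P ⊆ A), ⨆ (_ : IsCompact P), ENNReal.ofReal a * volume P)
        ≤ ENNReal.ofReal a * volume (∅ : Set ℝ) :=
      iSup_le fun i => iSup_le fun j => absurd ⟨i, j⟩ hP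
    refine (add_le_add_left this _).trans ?_
    rw [measure_empty, mul_zero, zero_add]
    refine iSup_le fun i => iSup_le fun j => ?_
    refine le_trans ?_ (bm_compact {x0} (insert y0 Q) C a b ha hb isCompact_singleton (j.insert _)
      (by simp) (by simp) ?_)
    · refine le_trans ?_ le_add_self
      gcongr
      simp
    · rintro x rfl y (rfl | hy)
      · exact h _ hx0 _ hy0
      · exact h _ hx0 _ (i hy)
  rw [iSup_pos hP.1, iSup_pos hP.2]
  have : (⨆ (_ : Q ⊆ B), ⨆ (_ : IsCompact Q), ENNReal.ofReal b * volume Q) ≤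
      ⨆ (_ : Q ⊆ B ∧ IsCompact Q), ENNReal.ofReal b * volume Q :=
    iSup_le fun i => iSup_le fun j => le_iSup_of_le ⟨i, j⟩ le_rfl
  refine (add_le_add_right this _).trans ?_
  by_cases hQ : Q ⊆ B ∧ IsCompact Q
  · rw [iSup_pos hQ]
    refine le_trans ?_ (bm_compact (insert x0 P) (insert y0 Q) C a b ha hb (hP.2.insert _)
      (hQ.2.insert _) (by simp) (by simp) ?_)
    · gcongr <;> simp
    · rintro x hx y hy
      exact h _ (Set.insert_subset hx0 hP.1 hx) _ (Set.insert_subset hy0 hQ.1 hy)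
  · rw [iSup_neg hQ]
    refine le_trans ?_ (bm_compact (insert x0 P) {y0} C a b ha hb (hP.2.insert _)
      isCompact_singleton (by simp) (by simp) ?_)
    · refine le_trans (le_of_eq (add_zero _)) (le_trans ?_ le_self_add)
      gcongr
      simp
    · rintro x hx y rfl
      exact h _ (Set.insert_subset hx0 hP.1 hx) _ hy0

lemma layer {f : ℝ → ENNReal} (hf : Measurable f) (h1 : ∀ x, f x ≤ 1) :
    ∫⁻ x, f x = ∫⁻ s in Set.Ioo (0 : ℝ) 1, volume {x | ENNReal.ofReal s < f x} := by
  have hfin : ∀ x, f x ≠ ⊤ := fun x => ((h1 x).trans_lt ENNReal.one_lt_top).ne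
  have e : ∫⁻ x, f x = ∫⁻ x, ENNReal.ofReal ((f x).toReal) := by
    simp [ENNReal.ofReal_toReal, hfin]
  rw [e, lintegral_eq_lintegral_meas_lt volume (Filter.Eventually.of_forall fun x => by simp)
    hf.ennreal_toReal.aemeasurable, ← Set.Ioo_union_Ici_eq_Ioi (zero_lt_one' ℝ),
    lintegral_union measurableSet_Ici]
  · have z : ∫⁻ s in Set.Ici (1 : ℝ), volume {x | s < (f x).toReal} = 0 := by
      rw [setLIntegral_congr_fun (g := fun _ => 0) measurableSet_Ici, lintegral_zero]
      intro s hs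
      have : {x | s < (f x).toReal} = ∅ := by
        ext x
        simp only [Set.mem_ofPred_eq, Set.mem_empty_iff_false, iff_false, not_lt]
        refine le_trans ?_ hs
        exact ENNReal.toReal_le_of_le_ofReal zero_le_one (by simpa using h1 x)
      simp [this]
    rw [z, add_zero]
    refine setLIntegral_congr_fun measurableSet_Ioo fun s hs => ?_
    simp only [ENNReal.ofReal_lt_iff_lt_toReal hs.1.le (hfin _)]
  · rw [Set.disjoint_left]; rintro x ⟨_, h⟩ h'; exact absurd h' (not_le.2 h)

lemma amgm (x y : ENNReal) (a b : ℝ) (ha : 0 < a) (hb : 0 < b) (hab : a + b = 1) :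
    x ^ a * y ^ b ≤ ENNReal.ofReal a * x + ENNReal.ofReal b * y := by
  have hpq : Real.HolderConjugate a⁻¹ b⁻¹ :=
    ⟨by simpa using hab, by positivity, by positivity⟩
  have := ENNReal.young_inequality (x ^ a) (y ^ b) hpq
  rw [← ENNReal.rpow_mul, ← ENNReal.rpow_mul, mul_inv_cancel₀ ha.ne', mul_inv_cancel₀ hb.ne',
    ENNReal.rpow_one, ENNReal.rpow_one, ENNReal.ofReal_inv_of_pos ha, ENNReal.ofReal_inv_of_pos hb,
    div_eq_mul_inv, div_eq_mul_inv, inv_inv, inv_inv] at this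
  rwa [mul_comm x, mul_comm y] at this

lemma pl_norm (f g h : ℝ → ENNReal) (hf : Measurable f) (hg : Measurable g) (hh : Measurable h)
    (f1 : ∀ x, f x ≤ 1) (g1 : ∀ x, g x ≤ 1) (h1 : ∀ x, h x ≤ 1)
    (fs : ⨆ x, f x = 1) (gs : ⨆ x, g x = 1)
    (a b : ℝ) (ha : 0 < a) (hb : 0 < b) (hab : a + b = 1)
    (H : ∀ x y, f x ^ a * g y ^ b ≤ h (a * x + b * y)) :
    (∫⁻ x, f x) ^ a * (∫⁻ x, g x) ^ b ≤ ∫⁻ x, h x := by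
  refine (amgm _ _ a b ha hb hab).trans ?_
  rw [layer hf f1, layer hg g1, layer hh h1]
  have mm : ∀ f : ℝ → ENNReal, Measurable fun s : ℝ => volume {x | ENNReal.ofReal s < f x} := by
    intro f
    refine Antitone.measurable fun s t hst => measure_mono fun x hx => ?_
    exact lt_of_le_of_lt (ENNReal.ofReal_le_ofReal hst) hx
  rw [← lintegral_const_mul _ (mm f), ← lintegral_const_mul _ (mm g),
    ← lintegral_add_left ((mm f).const_mul _)]
  refine setLIntegral_mono (mm h) fun s hs => ?_
  have hs1 : ENNReal.ofReal s < 1 := by simpa using hs.2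
  refine bm_one _ _ _ a b ha hb (measurableSet_lt measurable_const hf)
    (measurableSet_lt measurable_const hg) ?_ ?_ ?_
  · rw [← fs] at hs1; exact lt_iSup_iff.1 hs1
  · rw [← gs] at hs1; exact lt_iSup_iff.1 hs1
  · intro x hx y hy
    refine lt_of_lt_of_le ?_ (H x y)
    have s0 : ENNReal.ofReal s ≠ 0 := by simpa using hs.1
    calc ENNReal.ofReal s = ENNReal.ofReal s ^ a * ENNReal.ofReal s ^ b := by
          rw [← ENNReal.rpow_add _ _ s0 (by simp), hab, ENNReal.rpow_one]
      _ < f x ^ a * g y ^ b :=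
          ENNReal.mul_lt_mul (ENNReal.rpow_lt_rpow hx ha) (ENNReal.rpow_lt_rpow hy hb)

lemma pl_bdd (f g h : ℝ → ENNReal) (hf : Measurable f) (hg : Measurable g) (hh : Measurable h)
    (fs : ⨆ x, f x ≠ ⊤) (gs : ⨆ x, g x ≠ ⊤)
    (a b : ℝ) (ha : 0 < a) (hb : 0 < b) (hab : a + b = 1)
    (H : ∀ x y, f x ^ a * g y ^ b ≤ h (a * x + b * y)) :
    (∫⁻ x, f x) ^ a * (∫⁻ x, g x) ^ b ≤ ∫⁻ x, h x := by
  set A := ⨆ x, f x with hA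
  set B := ⨆ x, g x with hB
  by_cases A0 : A = 0
  · have : ∀ x, f x = 0 := by simpa [hA] using A0
    simp [this, ha]
  by_cases B0 : B = 0
  · have : ∀ x, g x = 0 := by simpa [hB] using B0
    simp [this, hb]
  have Aa0 : A ^ a ≠ 0 := by simp [A0, fs]
  have Bb0 : B ^ b ≠ 0 := by simp [B0, gs]
  have Aat : A ^ a ≠ ⊤ := ENNReal.rpow_ne_top_of_nonneg ha.le fs
  have Bbt : B ^ b ≠ ⊤ := ENNReal.rpow_ne_top_of_nonneg hb.le gs
  set D := A ^ a * B ^ b with hD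
  have D0 : D ≠ 0 := mul_ne_zero Aa0 Bb0
  have Dt : D ≠ ⊤ := ENNReal.mul_ne_top Aat Bbt
  have dv : ∀ u v : ENNReal, (u / A) ^ a * (v / B) ^ b = u ^ a * v ^ b / D := by
    intro u v
    rw [ENNReal.div_rpow_of_nonneg _ _ ha.le, ENNReal.div_rpow_of_nonneg _ _ hb.le,
      hD, ENNReal.mul_div_mul_comm (.inl Aa0) (.inl Aat)]
  have fA : ∀ x, f x / A ≤ 1 := fun x =>
    ENNReal.div_le_of_le_mul (by rw [one_mul]; exact le_iSup f x)
  have gB : ∀ x, g x / B ≤ 1 := fun x =>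
    ENNReal.div_le_of_le_mul (by rw [one_mul]; exact le_iSup g x)
  have key := pl_norm (fun x => f x / A) (fun x => g x / B) (fun x => min (h x / D) 1)
    (hf.div_const _) (hg.div_const _) ((hh.div_const _).min measurable_const)
    fA gB (fun x => min_le_right _ _)
    (by rw [← ENNReal.iSup_div, ENNReal.div_self A0 fs])
    (by rw [← ENNReal.iSup_div, ENNReal.div_self B0 gs]) a b ha hb hab ?_
  · have key2 := key.trans (lintegral_mono (g := fun x => h x / D) fun x => min_le_left _ _)
    simp only [div_eq_mul_inv] at key2
    rw [lintegral_mul_const _ hf, lintegral_mul_const _ hg, lintegral_mul_const _ hh] at key2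
    simp only [← div_eq_mul_inv] at key2
    rw [dv] at key2
    rwa [ENNReal.div_le_iff D0 Dt, ENNReal.div_mul_cancel D0 Dt] at key2
  · intro x y
    refine le_min ?_ ?_
    · rw [dv]; exact ENNReal.div_le_div_right (H x y) _
    · exact mul_le_one' (ENNReal.rpow_le_one (fA x) ha.le) (ENNReal.rpow_le_one (gB y) hb.le)

def PL (E : Type) [AddCommGroup E] [Module ℝ E] [MeasureSpace E] : Prop :=
  ∀ f g h : E → ENNReal, Measurable f → Measurable g → Measurable h →
    ∀ a b : ℝ, 0 < a → 0 < b → a + b = 1 →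
    (∀ x y, f x ^ a * g y ^ b ≤ h (a • x + b • y)) →
    (∫⁻ x, f x) ^ a * (∫⁻ x, g x) ^ b ≤ ∫⁻ x, h x

lemma trunc {f : ℝ → ENNReal} (hf : Measurable f) :
    ∫⁻ x, f x = ⨆ k : ℕ, ∫⁻ x, min (f x) k := by
  rw [← lintegral_iSup (fun k => hf.min measurable_const)]
  · congr with x
    have := inf_iSup_eq (f x) (fun k : ℕ => (k : ENNReal))
    rw [ENNReal.iSup_natCast, inf_top_eq] at this
    exact this
  · intro i j hij x
    dsimp only
    gcongr

lemma rpow_iSup' {ι : Type} (u : ι → ENNReal) (a : ℝ) (ha : 0 < a) :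
    (⨆ i, u i) ^ a = ⨆ i, u i ^ a :=
  (ENNReal.orderIsoRpow a ha).map_iSup u

lemma pl_real : PL ℝ := by
  intro f g h hf hg hh a b ha hb hab H
  have hb' : ∀ (u : ℝ → ENNReal) (k : ℕ), ⨆ x, min (u x) (k : ENNReal) ≠ ⊤ := fun u k =>
    ((iSup_le fun x => min_le_right _ _).trans_lt (ENNReal.natCast_lt_top k)).ne
  have key : ∀ k l : ℕ, (∫⁻ x, min (f x) k) ^ a * (∫⁻ x, min (g x) l) ^ b ≤ ∫⁻ x, h x := by
    intro k l
    refine pl_bdd _ _ h (hf.min measurable_const) (hg.min measurable_const) hh (hb' f k) (hb' g l)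
      a b ha hb hab fun x y => le_trans ?_ (H x y)
    gcongr <;> exact min_le_left _ _
  rw [trunc hf, trunc hg, rpow_iSup' _ _ ha, rpow_iSup' _ _ hb, ENNReal.iSup_mul]
  refine iSup_le fun k => ?_
  rw [ENNReal.mul_iSup]
  exact iSup_le fun l => key k l

lemma pl_prod {E F : Type} [AddCommGroup E] [Module ℝ E] [MeasureSpace E]
    [AddCommGroup F] [Module ℝ F] [MeasureSpace F] [SFinite (volume : Measure F)]
    (hE : PL E) (hF : PL F) : PL (E × F) := by
  intro f g h hf hg hh a b ha hb hab H
  rw [Measure.volume_eq_prod, lintegral_prod _ hf.aemeasurable, lintegral_prod _ hg.aemeasurable,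
    lintegral_prod _ hh.aemeasurable]
  refine hE _ _ _ hf.lintegral_prod_right' hg.lintegral_prod_right' hh.lintegral_prod_right'
    a b ha hb hab fun x x' => ?_
  refine hF _ _ _ (hf.comp measurable_prodMk_left) (hg.comp measurable_prodMk_left)
    (hh.comp measurable_prodMk_left) a b ha hb hab fun y y' => ?_
  exact H (x, y) (x', y')

lemma pl_transfer {E F : Type} [AddCommGroup E] [Module ℝ E] [MeasureSpace E]
    [AddCommGroup F] [Module ℝ F] [MeasureSpace F] (hE : PL E) (e : E ≃ᵐ F)
    (he : MeasurePreserving e volume volume)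
    (hl : ∀ (a b : ℝ) x y, e (a • x + b • y) = a • e x + b • e y) : PL F := by
  intro f g h hf hg hh a b ha hb hab H
  rw [he.lintegral_map_equiv f, he.lintegral_map_equiv g, he.lintegral_map_equiv h]
  refine hE _ _ _ (hf.comp e.measurable) (hg.comp e.measurable) (hh.comp e.measurable)
    a b ha hb hab fun x y => ?_
  simp only [Function.comp, hl]
  exact H _ _

lemma pl_pi (n : ℕ) : PL (Fin n → ℝ) := by
  induction n with
  | zero =>
    intro f g h hf hg hh a b ha hb hab H
    have hv : volume (Set.univ : Set (Fin 0 → ℝ)) = 1 := by simp [volume_pi]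
    rw [lintegral_unique, lintegral_unique, lintegral_unique, hv, mul_one, mul_one, mul_one]
    refine (H _ _).trans (le_of_eq ?_)
    congr 1
    exact Subsingleton.elim _ _
  | succ n ih =>
    refine pl_transfer (pl_prod pl_real ih) (MeasurableEquiv.piFinSuccAbove (fun _ => ℝ) 0).symm
      (volume_preserving_piFinSuccAbove (fun _ => ℝ) 0).symm ?_
    intro a b x y
    rw [MeasurableEquiv.symm_apply_eq]
    have hx := (MeasurableEquiv.piFinSuccAbove (fun _ : Fin (n+1) => ℝ) 0).apply_symm_apply x
    have hy := (MeasurableEquiv.piFinSuccAbove (fun _ : Fin (n+1) => ℝ) 0).apply_symm_apply y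
    conv_lhs => rw [← hx, ← hy]
    rfl

lemma pl_eucl (n : ℕ) : PL (EuclideanSpace ℝ (Fin n)) :=
  pl_transfer (pl_pi n) (MeasurableEquiv.toLp 2 (Fin n → ℝ))
    (PiLp.volume_preserving_toLp (Fin n)) (fun _ _ _ _ => rfl)

lemma gaussian_interior {n : ℕ} (K : Set (EuclideanSpace ℝ (Fin n))) (hK : Convex ℝ K) :
    gaussian n K ≤ gaussian n (interior K) := by
  have h0 : gaussian n (frontier K) = 0 :=
    withDensity_absolutelyContinuous _ _ (hK.addHaar_frontier volume)
  calc gaussian n K ≤ gaussian n (interior K ∪ frontier K) :=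
        measure_mono (by rw [← closure_eq_interior_union_frontier]; exact subset_closure)
    _ ≤ gaussian n (interior K) + gaussian n (frontier K) := measure_union_le _ _
    _ = _ := by rw [h0, add_zero]

lemma dens_logconcave {n : ℕ} (x y : EuclideanSpace ℝ (Fin n)) (a b c : ℝ) (hc : 0 < c)
    (ha : 0 < a) (hb : 0 < b) (hab : a + b = 1) :
    ENNReal.ofReal (c * Real.exp (-‖x‖ ^ 2 / 2)) ^ a *
      ENNReal.ofReal (c * Real.exp (-‖y‖ ^ 2 / 2)) ^ b ≤
      ENNReal.ofReal (c * Real.exp (-‖a • x + b • y‖ ^ 2 / 2)) := by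
  rw [ENNReal.ofReal_rpow_of_pos (by positivity), ENNReal.ofReal_rpow_of_pos (by positivity),
    ← ENNReal.ofReal_mul (by positivity)]
  apply ENNReal.ofReal_le_ofReal
  rw [Real.mul_rpow hc.le (Real.exp_pos _).le, Real.mul_rpow hc.le (Real.exp_pos _).le,
    ← Real.exp_mul, ← Real.exp_mul, mul_mul_mul_comm, ← Real.rpow_add hc, hab, Real.rpow_one,
    ← Real.exp_add]
  gcongr
  have h1 : ‖a • x + b • y‖ ≤ a * ‖x‖ + b * ‖y‖ := by
    refine (norm_add_le _ _).trans (le_of_eq ?_)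
    rw [norm_smul, norm_smul, Real.norm_of_nonneg ha.le, Real.norm_of_nonneg hb.le]
  have h2 : ‖a • x + b • y‖ ^ 2 ≤ (a * ‖x‖ + b * ‖y‖) ^ 2 := by gcongr
  have h3 : (a * ‖x‖ + b * ‖y‖) ^ 2 ≤ a * ‖x‖ ^ 2 + b * ‖y‖ ^ 2 := by
    have : b = 1 - a := by linarith
    subst this
    nlinarith [mul_nonneg (mul_nonneg ha.le hb.le) (sq_nonneg (‖x‖ - ‖y‖))]
  linarith

/-- Log-concavity (multiplicative Brunn–Minkowski) of the standard Gaussian measure on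
convex sets: `γⁿ((1−t)K + tL) ≥ γⁿ(K)^(1−t) · γⁿ(L)^t` for `t ∈ (0,1)`. -/
theorem stmt4 {n : ℕ} (K L : Set (EuclideanSpace ℝ (Fin n)))
    (hK : Convex ℝ K) (hL : Convex ℝ L) (t : ℝ) (ht : t ∈ Set.Ioo (0 : ℝ) 1) :
    gaussian n K ^ (1 - t) * gaussian n L ^ t ≤ gaussian n ((1 - t) • K + t • L) := by
  obtain ⟨ht0, ht1⟩ := ht
  have hs : 0 < 1 - t := by linarith
  refine (mul_le_mul' (ENNReal.rpow_le_rpow (gaussian_interior K hK) hs.le)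
    (ENNReal.rpow_le_rpow (gaussian_interior L hL) ht0.le)).trans ?_
  have hoK : IsOpen (interior K) := isOpen_interior
  have hoL : IsOpen (interior L) := isOpen_interior
  have hoM : IsOpen ((1 - t) • interior K + t • interior L) :=
    (hoL.smul₀ ht0.ne').add_left
  refine le_trans ?_ (measure_mono (Set.add_subset_add
    (Set.smul_set_mono interior_subset) (Set.smul_set_mono interior_subset)))
  unfold gaussian
  rw [withDensity_apply _ hoK.measurableSet, withDensity_apply _ hoL.measurableSet,
    withDensity_apply _ hoM.measurableSet, ← lintegral_indicator hoK.measurableSet,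
    ← lintegral_indicator hoL.measurableSet, ← lintegral_indicator hoM.measurableSet]
  have hm : Measurable fun x : EuclideanSpace ℝ (Fin n) =>
      ENNReal.ofReal ((2 * Real.pi) ^ (-(n : ℝ) / 2) * Real.exp (-‖x‖ ^ 2 / 2)) := by fun_prop
  refine pl_eucl n _ _ _ (hm.indicator hoK.measurableSet) (hm.indicator hoL.measurableSet)
    (hm.indicator hoM.measurableSet) (1 - t) t hs ht0 (by ring) fun x y => ?_
  by_cases hx : x ∈ interior K
  swap
  · simp [hx, hs]
  by_cases hy : y ∈ interior L
  swap
  · simp [hy, ht0]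
  rw [Set.indicator_of_mem hx, Set.indicator_of_mem hy, Set.indicator_of_mem
    (Set.add_mem_add (Set.smul_mem_smul_set hx) (Set.smul_mem_smul_set hy))]
  exact dens_logconcave x y _ _ _ (by positivity) hs ht0 (by ring)
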